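/- If f: X → Y is a continuous Max-Plus affine map between Max-Plus convex compacta, then the barycenter diagram commutes: f ∘ β_X = β_Y ∘ If, i.e., f(β_X(μ)) = β_Y(If(μ)) for every idempotent measure μ on X. -/

import Mathlib

open Topology

noncomputable section

def IsIdempotentMeasure {Z : Type*} [TopologicalSpace Z] (μ : C(Z, ℝ) → ℝ) : Prop :=
  μ 1 = 1 ∧ (∀ (c : ℝ) (φ : C(Z, ℝ)), μ (ContinuousMap.const Z c + φ) = c + μ φ) ∧
    ∀ φ ψ : C(Z, ℝ), μ (φ ⊔ ψ) = max (μ φ) (μ ψ)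

abbrev IM (Z : Type*) [TopologicalSpace Z] : Type _ :=
  {μ : C(Z, ℝ) → ℝ // IsIdempotentMeasure μ}

def density {Z : Type*} [TopologicalSpace Z] (μ : C(Z, ℝ) → ℝ) (z : Z) : EReal :=
  ⨅ φ : {φ : C(Z, ℝ) // φ ≤ 0 ∧ φ z = 0}, ((μ φ.1 : ℝ) : EReal)

def pushforward {X Y : Type*} [TopologicalSpace X] [TopologicalSpace Y]
    (f : C(X, Y)) (μ : C(X, ℝ) → ℝ) : C(Y, ℝ) → ℝ :=
  fun ψ => μ (ψ.comp f)

def mpComb {τ : Type*} (α : EReal) (a b : τ → ℝ) : τ → ℝ :=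
  fun t => ((α + (a t : EReal)) ⊔ ((b t : ℝ) : EReal)).toReal

def MaxPlusConvex {τ : Type*} (A : Set (τ → ℝ)) : Prop :=
  ∀ a ∈ A, ∀ b ∈ A, ∀ α : EReal, α ≤ 0 → mpComb α a b ∈ A

def projCM {T : Type*} (A : Set (T → ℝ)) (t : T) : C(A, ℝ) :=
  ⟨fun a => a.1 t, (continuous_apply t).comp continuous_subtype_val⟩

def tilde {Z : Type*} [TopologicalSpace Z] (φ : C(Z, ℝ)) : C(IM Z, ℝ) :=
  ⟨fun ν => ν.1 φ, (continuous_apply φ).comp continuous_subtype_val⟩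

theorem idem_zero {Z : Type*} [TopologicalSpace Z] {μ : C(Z, ℝ) → ℝ}
    (hμ : IsIdempotentMeasure μ) : μ 0 = 0 := by
  have h := hμ.2.1 1 0
  have h1 : ContinuousMap.const Z (1 : ℝ) + 0 = 1 := by ext; simp
  rw [h1, hμ.1] at h
  linarith

theorem idem_mono {Z : Type*} [TopologicalSpace Z] {μ : C(Z, ℝ) → ℝ}
    (hμ : IsIdempotentMeasure μ) {φ ψ : C(Z, ℝ)} (h : φ ≤ ψ) : μ φ ≤ μ ψ := by
  have h1 := hμ.2.2 φ ψ
  rw [sup_eq_right.mpr h] at h1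
  rw [h1]
  exact le_max_left _ _

theorem idem_attained {Z : Type*} [TopologicalSpace Z] [CompactSpace Z] [Nonempty Z]
    {μ : C(Z, ℝ) → ℝ} (hμ : IsIdempotentMeasure μ) (φ : C(Z, ℝ)) :
    ∃ x : Z, ∃ d : ℝ, d + φ x = μ φ ∧ ∀ ψ : C(Z, ℝ), d + ψ x ≤ μ ψ := by
  by_contra hcon
  push Not at hcon
  have hx : ∀ x : Z, ∃ ψ : C(Z, ℝ), μ ψ ≤ 0 ∧ φ x - μ φ < ψ x := by
    intro x
    obtain ⟨ψ, hψ⟩ := hcon x (μ φ - φ x) (by ring)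
    refine ⟨ContinuousMap.const Z (-μ ψ) + ψ, ?_, ?_⟩
    · rw [hμ.2.1]; linarith
    · simp only [ContinuousMap.add_apply, ContinuousMap.const_apply]; linarith
  have : Nonempty {ψ : C(Z, ℝ) // μ ψ ≤ 0} := ⟨⟨0, (idem_zero hμ).le⟩⟩
  obtain ⟨⟨ψ, hψ⟩, hsub⟩ := isCompact_univ.elim_directed_cover
    (fun ψ : {ψ : C(Z, ℝ) // μ ψ ≤ 0} => {x : Z | φ x - μ φ < ψ.1 x})
    (fun ψ => isOpen_lt (by fun_prop) (by fun_prop))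
    (fun x _ => by
      obtain ⟨ψ, h1, h2⟩ := hx x
      exact Set.mem_iUnion.mpr ⟨⟨ψ, h1⟩, h2⟩)
    (fun ψ₁ ψ₂ => ⟨⟨ψ₁.1 ⊔ ψ₂.1, by rw [hμ.2.2]; exact max_le ψ₁.2 ψ₂.2⟩,
      fun x hx => lt_of_lt_of_le hx (le_sup_left (a := ψ₁.1 x) (b := ψ₂.1 x)),
      fun x hx => lt_of_lt_of_le hx (le_sup_right (a := ψ₁.1 x) (b := ψ₂.1 x))⟩)
  obtain ⟨x₀, -, hmin⟩ := isCompact_univ.exists_isMinOn (Set.univ_nonempty (α := Z))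
    (f := fun x => ψ x - φ x) (by fun_prop)
  have h0 : φ x₀ - μ φ < ψ x₀ := hsub (Set.mem_univ x₀)
  have hle : ContinuousMap.const Z (ψ x₀ - φ x₀) + φ ≤ ψ := by
    intro x
    have : ψ x₀ - φ x₀ ≤ ψ x - φ x := hmin (Set.mem_univ x)
    change (ψ x₀ - φ x₀) + φ x ≤ ψ x
    linarith
  have h1 := idem_mono hμ hle
  rw [hμ.2.1] at h1
  linarith

theorem mpComb_real {τ : Type*} (d : ℝ) (a b : τ → ℝ) (t : τ) :
    mpComb (d : EReal) a b t = max (d + a t) (b t) := by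
  unfold mpComb
  rw [← EReal.coe_add]
  rcases le_total (d + a t) (b t) with h | h
  · rw [max_eq_right h, sup_eq_right.mpr (EReal.coe_le_coe_iff.mpr h), EReal.toReal_coe]
  · rw [max_eq_left h, sup_eq_left.mpr (EReal.coe_le_coe_iff.mpr h), EReal.toReal_coe]

theorem barycenter_natural_affine {S T : Type*} (X : Set (S → ℝ)) (Y : Set (T → ℝ))
    (hX : IsCompact X) (hY : IsCompact Y) (hXc : MaxPlusConvex X) (hYc : MaxPlusConvex Y)
    (f : C(X, Y))
    (haff : ∀ (a b : X) (α : EReal), α ≤ 0 → ∀ h : mpComb α a.1 b.1 ∈ X,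
      ((f ⟨mpComb α a.1 b.1, h⟩ : Y) : T → ℝ) =
        mpComb α ((f a : Y) : T → ℝ) ((f b : Y) : T → ℝ))
    (μ : C(X, ℝ) → ℝ) (hμ : IsIdempotentMeasure μ)
    (hmem : (fun s => μ (projCM X s)) ∈ X) :
    ((f ⟨fun s => μ (projCM X s), hmem⟩ : Y) : T → ℝ) =
      fun t => pushforward f μ (projCM Y t) := by
  have : CompactSpace X := isCompact_iff_compactSpace.mp hX
  have : Nonempty X := ⟨⟨_, hmem⟩⟩
  funext t
  set g : C(X, ℝ) := (projCM Y t).comp f with hg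
  have hgx : ∀ x : X, g x = (f x : T → ℝ) t := fun x => rfl
  change g ⟨fun s => μ (projCM X s), hmem⟩ = μ g
  have hμ0 := idem_zero hμ
  -- one step: adjoin a weighted point
  have step : ∀ (x y : X) (d : ℝ), (∀ ψ : C(X, ℝ), d + ψ y ≤ μ ψ) →
      ∃ z : X, (∀ s, z.1 s = max (d + y.1 s) (x.1 s)) ∧ g z = max (d + g y) (g x) := by
    intro x y d hd
    have hd0 : (d : EReal) ≤ 0 := by
      have := hd 0
      rw [hμ0] at this
      simp only [ContinuousMap.zero_apply, add_zero] at this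
      exact_mod_cast this
    have hm := hXc y.1 y.2 x.1 x.2 d hd0
    refine ⟨⟨_, hm⟩, fun s => mpComb_real d _ _ s, ?_⟩
    rw [hgx, haff y x d hd0 hm, mpComb_real]
    rfl
  have key : ∀ I : Finset S, ∃ x : X, (∀ s, x.1 s ≤ μ (projCM X s)) ∧ g x = μ g ∧
      ∀ s ∈ I, x.1 s = μ (projCM X s) := by
    classical
    intro I
    induction I using Finset.induction_on with
    | empty =>
      obtain ⟨x, d, h1, h2⟩ := idem_attained hμ 0
      rw [hμ0] at h1
      have hd : d = 0 := by simpa using h1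
      subst hd
      obtain ⟨y, d, h3, h4⟩ := idem_attained hμ g
      obtain ⟨z, hz, hgz⟩ := step x y d h4
      refine ⟨z, fun s => ?_, ?_, by simp⟩
      · rw [hz]
        refine max_le (h4 (projCM X s)) ?_
        have := h2 (projCM X s)
        rwa [zero_add] at this
      · rw [hgz, h3]
        have := h2 g
        rw [zero_add] at this
        exact max_eq_left this
    | insert s₀ I _ ih =>
      obtain ⟨x, h1, h2, h3⟩ := ih
      obtain ⟨y, d, h4, h5⟩ := idem_attained hμ (projCM X s₀)
      obtain ⟨z, hz, hgz⟩ := step x y d h5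
      refine ⟨z, fun s => ?_, ?_, fun s hs => ?_⟩
      · rw [hz]
        exact max_le (h5 (projCM X s)) (h1 s)
      · rw [hgz, h2]
        exact max_eq_right (h5 g)
      · rw [hz]
        rcases Finset.mem_insert.mp hs with rfl | hs
        · exact (max_eq_left ((h1 s).trans h4.ge)).trans h4
        · rw [h3 s hs]
          exact max_eq_right (h5 (projCM X s))
  have hcl : IsClosed {x : X | g x = μ g} := isClosed_eq (by fun_prop) continuous_const
  change (⟨fun s => μ (projCM X s), hmem⟩ : X) ∈ {x : X | g x = μ g}
  rw [← hcl.closure_eq, mem_closure_iff]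
  rintro o ho hb
  obtain ⟨V, hV, rfl⟩ := isOpen_induced_iff.mp ho
  obtain ⟨I, u, hu, hsub⟩ := isOpen_pi_iff.mp hV _ hb
  obtain ⟨x, -, h2, h3⟩ := key I
  refine ⟨x, hsub ?_, h2⟩
  intro s hs
  rw [h3 s hs]
  exact (hu s hs).2
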